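/- Let n ≥ 1 and let w be a solution as in the context. Define q(t,x) = 4t(x·∇w)∂_t w + (|x|²+t²)(|∇w|² + (∂_t w)²) + 2(n−1)t w ∂_t w − (n−1)w², where ∇w is the spatial gradient. Then the conformal energy is conserved: for every T ∈ ℝ, ∫_{ℝⁿ} q(T,x) dx = ∫_{ℝⁿ} q(0,x) dx. -/

import Mathlib

/-!
The conformal energy is conserved because its density satisfies a local conservation law.
Regard `w` as a function `W` on spacetime `ℝ × ℝⁿ`, and write `r = |x|² + t²`. With the flux
`F_j = 2 r w_t w_j + 2 t x_j w_t² + 4 t (x·∇w) w_j - 2 t x_j |∇w|² + 2 (n-1) t w w_j`,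
the wave equation gives `∂_t q = ∑_j ∂_j F_j` pointwise (`conservation_law`). The only cancellation
in this identity that is not plain algebra comes from the symmetry of the Hessian of `w`.

Since `w` vanishes on the open set `R + |t| < |x|`, so do all its derivatives, hence `q` and `F_j`.
On each time slice, therefore, everything is compactly supported: one may differentiate `∫ q dx`
under the integral sign (`hasDerivAt_integral_slice`), and each `∫ ∂_j F_j dx` is zero
(`integral_dirDeriv_space`). So `t ↦ ∫ q(t,x) dx` has zero derivative and is constant.
-/


noncomputable section
open MeasureTheory Real
open scoped RealInnerProductSpace BigOperators

abbrev Euc (n : ℕ) := EuclideanSpace ℝ (Fin n)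

/-- Time derivative `∂_t w`. -/
def pt {n : ℕ} (w : ℝ → Euc n → ℝ) (t : ℝ) (x : Euc n) : ℝ :=
  deriv (fun s => w s x) t

/-- Spatial partial derivative `∂_{x_j} f`. -/
def pj {n : ℕ} (f : Euc n → ℝ) (x : Euc n) (j : Fin n) : ℝ :=
  fderiv ℝ f x (EuclideanSpace.single j 1)

/-- Spatial Laplacian `Δ_x f = ∑_j ∂²_{x_j} f`. -/
def lap {n : ℕ} (f : Euc n → ℝ) (x : Euc n) : ℝ :=
  ∑ j, pj (fun y => pj f y j) x j

/-- The conformal energy density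
`q = 4t(x·∇w)∂_t w + (|x|²+t²)(|∇w|² + (∂_t w)²) + 2(n−1)t w ∂_t w − (n−1)w²`. -/
def Qdens {n : ℕ} (w : ℝ → Euc n → ℝ) (t : ℝ) (x : Euc n) : ℝ :=
  4 * t * ⟪x, gradient (w t) x⟫ * pt w t x
    + (‖x‖ ^ 2 + t ^ 2) * (‖gradient (w t) x‖ ^ 2 + (pt w t x) ^ 2)
    + 2 * ((n : ℝ) - 1) * t * (w t x) * pt w t x
    - ((n : ℝ) - 1) * (w t x) ^ 2

/-! ### Directional derivatives on spacetime -/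

/-- The directional derivative of a function on spacetime `ℝ × ℝⁿ` along the constant vector `v`. -/
def dirDeriv {n : ℕ} (v : ℝ × Euc n) (F : ℝ × Euc n → ℝ) (p : ℝ × Euc n) : ℝ :=
  fderiv ℝ F p v

/-- The unit vector in the time direction. -/
abbrev eT (n : ℕ) : ℝ × Euc n := (1, 0)

/-- The unit vector in the `j`-th space direction. -/
abbrev eX {n : ℕ} (j : Fin n) : ℝ × Euc n := (0, EuclideanSpace.single j 1)

/-- The exterior of the light cone over the ball of radius `R`. -/
def coneExt (n : ℕ) (R : ℝ) : Set (ℝ × Euc n) := {p | R + |p.1| < ‖p.2‖}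

lemma isOpen_coneExt (n : ℕ) (R : ℝ) : IsOpen (coneExt n R) :=
  isOpen_lt (by fun_prop) (by fun_prop)

lemma contDiff_dirDeriv {n : ℕ} {F : ℝ × Euc n → ℝ} (hF : ContDiff ℝ (⊤ : ℕ∞) F)
    (v : ℝ × Euc n) : ContDiff ℝ (⊤ : ℕ∞) (dirDeriv v F) :=
  (hF.fderiv_right (m := (⊤ : ℕ∞)) (by simp)).clm_apply contDiff_const

lemma dirDeriv_comm {n : ℕ} {F : ℝ × Euc n → ℝ} (hF : ContDiff ℝ (⊤ : ℕ∞) F)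
    (u v : ℝ × Euc n) (p : ℝ × Euc n) :
    dirDeriv u (dirDeriv v F) p = dirDeriv v (dirDeriv u F) p := by
  have hd : DifferentiableAt ℝ (fderiv ℝ F) p :=
    (hF.fderiv_right (m := (⊤ : ℕ∞)) (by simp)).differentiable (by simp) p
  have key : ∀ a b : ℝ × Euc n,
      dirDeriv a (dirDeriv b F) p = fderiv ℝ (fderiv ℝ F) p a b := by
    intro a b
    unfold dirDeriv
    rw [fderiv_clm_apply hd (differentiableAt_const b)]
    simp
  rw [key, key]
  refine (hF.contDiffAt.isSymmSndFDerivAt ?_) u v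
  simp only [minSmoothness_of_isRCLikeNormedField]
  exact WithTop.coe_le_coe.2 (le_top : (2 : ℕ∞) ≤ ⊤)

lemma dirDeriv_eqOn_zero {n : ℕ} {F : ℝ × Euc n → ℝ} {U : Set (ℝ × Euc n)} (hU : IsOpen U)
    (hF : ∀ p ∈ U, F p = 0) (v : ℝ × Euc n) : ∀ p ∈ U, dirDeriv v F p = 0 := by
  intro p hp
  have h : F =ᶠ[nhds p] fun _ => 0 := by
    filter_upwards [hU.mem_nhds hp] with q hq using hF q hq
  simp [dirDeriv, h.fderiv_eq]

/-- Evaluates `dirDeriv` by restriction to a line, so that one-variable calculus applies. -/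
lemma hasDerivAt_line {n : ℕ} {F : ℝ × Euc n → ℝ} (hF : ContDiff ℝ (⊤ : ℕ∞) F)
    (p v : ℝ × Euc n) : HasDerivAt (fun s : ℝ => F (p + s • v)) (dirDeriv v F p) 0 :=
  ((hF.differentiable (by simp) p).hasFDerivAt).hasLineDerivAt v

lemma hasDerivAt_time {n : ℕ} {F : ℝ × Euc n → ℝ} (hF : ContDiff ℝ (⊤ : ℕ∞) F)
    (t : ℝ) (x : Euc n) : HasDerivAt (fun s : ℝ => F (s, x)) (dirDeriv (eT n) F (t, x)) t := by
  have h := (hF.differentiable (by simp) (t, x)).hasFDerivAt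
  exact h.comp_hasDerivAt t ((hasDerivAt_id t).prodMk (hasDerivAt_const t x))

lemma hasFDerivAt_space {n : ℕ} {F : ℝ × Euc n → ℝ} (hF : ContDiff ℝ (⊤ : ℕ∞) F)
    (t : ℝ) (x : Euc n) : HasFDerivAt (fun y => F (t, y))
      ((fderiv ℝ F (t, x)).comp (ContinuousLinearMap.inr ℝ ℝ (Euc n))) x := by
  have h := (hF.differentiable (by simp) (t, x)).hasFDerivAt
  exact h.comp x (hasFDerivAt_prodMk_right t x)

lemma fderiv_space {n : ℕ} {F : ℝ × Euc n → ℝ} (hF : ContDiff ℝ (⊤ : ℕ∞) F)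
    (t : ℝ) (x : Euc n) (j : Fin n) :
    fderiv ℝ (fun y => F (t, y)) x (EuclideanSpace.single j 1) = dirDeriv (eX j) F (t, x) := by
  rw [(hasFDerivAt_space hF t x).fderiv]
  simp [dirDeriv, eX]

/-! ### Integrals over time slices -/

lemma integrable_slice {n : ℕ} {R : ℝ} {F : ℝ × Euc n → ℝ} (hF : Continuous F)
    (h0 : ∀ p ∈ coneExt n R, F p = 0) (t : ℝ) : Integrable (fun x => F (t, x)) := by
  refine (show Continuous fun x => F (t, x) by fun_prop).integrable_of_hasCompactSupport ?_
  refine HasCompactSupport.intro (isCompact_closedBall (0 : Euc n) (R + |t|)) fun x hx => ?_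
  exact h0 _ (by simpa [coneExt] using hx)

/-- A spatial derivative has vanishing integral over each time slice. -/
lemma integral_dirDeriv_space {n : ℕ} {R : ℝ} {F : ℝ × Euc n → ℝ}
    (hF : ContDiff ℝ (⊤ : ℕ∞) F) (h0 : ∀ p ∈ coneExt n R, F p = 0) (t : ℝ) (j : Fin n) :
    ∫ x, dirDeriv (eX j) F (t, x) = 0 := by
  have hint := integrable_slice (contDiff_dirDeriv hF (eX j)).continuous
    (dirDeriv_eqOn_zero (isOpen_coneExt n R) h0 (eX j)) t
  have hint0 := integrable_slice hF.continuous h0 t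
  -- Integration by parts against the constant function `1`.
  have h := integral_mul_fderiv_eq_neg_fderiv_mul_of_integrable (μ := (volume : Measure (Euc n)))
    (f := fun _ : Euc n => (1 : ℝ)) (g := fun y => F (t, y)) (v := EuclideanSpace.single j 1)
    (by simp) (by simpa only [one_mul, fderiv_space hF] using hint) (by simpa using hint0)
    (fun x _ => differentiableAt_const _)
    (fun x _ => (hasFDerivAt_space hF t x).differentiableAt)
  simpa only [one_mul, fderiv_space hF, fderiv_fun_const, Pi.zero_apply,
    zero_apply, zero_mul, integral_zero, neg_zero] using h

/-- Differentiation under the integral sign; near a given time the integrand is supported in a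
fixed ball, on which its time derivative is bounded. -/
lemma hasDerivAt_integral_slice {n : ℕ} {R : ℝ} {F : ℝ × Euc n → ℝ}
    (hF : ContDiff ℝ (⊤ : ℕ∞) F) (h0 : ∀ p ∈ coneExt n R, F p = 0) (t : ℝ) :
    HasDerivAt (fun s => ∫ x, F (s, x)) (∫ x, dirDeriv (eT n) F (t, x)) t := by
  have hD := (contDiff_dirDeriv hF (eT n)).continuous
  have hD0 := dirDeriv_eqOn_zero (isOpen_coneExt n R) h0 (eT n)
  have hK : IsCompact (Metric.closedBall t 1 ×ˢ Metric.closedBall (0 : Euc n) (R + (|t| + 1))) :=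
    (isCompact_closedBall _ _).prod (isCompact_closedBall _ _)
  obtain ⟨C, hC⟩ := hK.exists_bound_of_continuousOn hD.continuousOn
  refine (hasDerivAt_integral_of_dominated_loc_of_deriv_le (μ := (volume : Measure (Euc n)))
    (F := fun s x => F (s, x)) (F' := fun s x => dirDeriv (eT n) F (s, x))
    (s := Metric.closedBall t 1)
    (bound := (Metric.closedBall (0 : Euc n) (R + (|t| + 1))).indicator fun _ => C)
    (Metric.closedBall_mem_nhds t one_pos) ?_ (integrable_slice hF.continuous h0 t)
    (integrable_slice hD hD0 t).aestronglyMeasurable ?_ ?_ ?_).2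
  · exact Filter.Eventually.of_forall fun s =>
      (integrable_slice hF.continuous h0 s).aestronglyMeasurable
  · refine Filter.Eventually.of_forall fun x s hs => ?_
    by_cases hx : x ∈ Metric.closedBall (0 : Euc n) (R + (|t| + 1))
    · rw [Set.indicator_of_mem hx]
      exact hC (s, x) ⟨hs, hx⟩
    · rw [Set.indicator_of_notMem hx, hD0, norm_zero]
      have h1 : |s - t| ≤ 1 := by simpa [Real.dist_eq] using hs
      have h2 := abs_sub_abs_le_abs_sub s t
      have h3 : R + (|t| + 1) < ‖x‖ := by simpa using hx
      change R + |s| < ‖x‖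
      linarith
  · exact (integrable_indicator_iff measurableSet_closedBall).2
      (integrableOn_const (isCompact_closedBall _ _).measure_lt_top.ne)
  · exact Filter.Eventually.of_forall fun x s _ => hasDerivAt_time hF s x

/-! ### The local conservation law -/

/-- The conformal energy density as a function on spacetime, in coordinates. -/
def confDensity {n : ℕ} (W : ℝ × Euc n → ℝ) (p : ℝ × Euc n) : ℝ :=
  4 * p.1 * (∑ i, p.2 i * dirDeriv (eX i) W p) * dirDeriv (eT n) W p
    + (∑ i, p.2 i ^ 2 + p.1 ^ 2) * (∑ i, dirDeriv (eX i) W p ^ 2 + dirDeriv (eT n) W p ^ 2)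
    + 2 * ((n : ℝ) - 1) * p.1 * W p * dirDeriv (eT n) W p
    - ((n : ℝ) - 1) * W p ^ 2

/-- The `j`-th component of the flux whose spatial divergence is the time derivative of the
conformal energy density. -/
def confFlux {n : ℕ} (W : ℝ × Euc n → ℝ) (j : Fin n) (p : ℝ × Euc n) : ℝ :=
  2 * (∑ i, p.2 i ^ 2 + p.1 ^ 2) * dirDeriv (eT n) W p * dirDeriv (eX j) W p
    + 2 * p.1 * p.2 j * dirDeriv (eT n) W p ^ 2
    + 4 * p.1 * (∑ i, p.2 i * dirDeriv (eX i) W p) * dirDeriv (eX j) W p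
    - 2 * p.1 * p.2 j * (∑ i, dirDeriv (eX i) W p ^ 2)
    + 2 * ((n : ℝ) - 1) * p.1 * W p * dirDeriv (eX j) W p

lemma contDiff_confDensity {n : ℕ} {W : ℝ × Euc n → ℝ} (hW : ContDiff ℝ (⊤ : ℕ∞) W) :
    ContDiff ℝ (⊤ : ℕ∞) (confDensity W) := by
  have h := contDiff_dirDeriv hW
  unfold confDensity
  fun_prop

lemma contDiff_confFlux {n : ℕ} {W : ℝ × Euc n → ℝ} (hW : ContDiff ℝ (⊤ : ℕ∞) W) (j : Fin n) :
    ContDiff ℝ (⊤ : ℕ∞) (confFlux W j) := by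
  have h := contDiff_dirDeriv hW
  unfold confFlux
  fun_prop

lemma dirDeriv_time_confDensity {n : ℕ} {W : ℝ × Euc n → ℝ} (hW : ContDiff ℝ (⊤ : ℕ∞) W)
    (p : ℝ × Euc n) :
    dirDeriv (eT n) (confDensity W) p =
      4 * (∑ i, p.2 i * dirDeriv (eX i) W p) * dirDeriv (eT n) W p
      + 4 * p.1 * (∑ i, p.2 i * dirDeriv (eT n) (dirDeriv (eX i) W) p) * dirDeriv (eT n) W p
      + 4 * p.1 * (∑ i, p.2 i * dirDeriv (eX i) W p) * dirDeriv (eT n) (dirDeriv (eT n) W) p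
      + 2 * p.1 * (∑ i, dirDeriv (eX i) W p ^ 2 + dirDeriv (eT n) W p ^ 2)
      + (∑ i, p.2 i ^ 2 + p.1 ^ 2) *
        (∑ i, 2 * dirDeriv (eX i) W p * dirDeriv (eT n) (dirDeriv (eX i) W) p
          + 2 * dirDeriv (eT n) W p * dirDeriv (eT n) (dirDeriv (eT n) W) p)
      + 2 * ((n : ℝ) - 1) * (p.1 * dirDeriv (eT n) W p ^ 2
          + p.1 * W p * dirDeriv (eT n) (dirDeriv (eT n) W) p) := by
  have ht : HasDerivAt (fun s : ℝ => (p + s • eT n).1) 1 0 := by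
    simpa using (hasDerivAt_id (0 : ℝ)).const_add p.1
  have hx : ∀ i, HasDerivAt (fun s : ℝ => (p + s • eT n).2 i) 0 0 := fun i => by
    simpa using hasDerivAt_const (0 : ℝ) (p.2 i)
  have h := hasDerivAt_line hW p (eT n)
  have hT := hasDerivAt_line (contDiff_dirDeriv hW (eT n)) p (eT n)
  have hX := fun i => hasDerivAt_line (contDiff_dirDeriv hW (eX i)) p (eT n)
  have hA := HasDerivAt.fun_sum (u := Finset.univ) fun i _ => (hx i).mul (hX i)
  have hr := HasDerivAt.fun_sum (u := Finset.univ) fun i _ => (hx i).pow 2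
  have hG := HasDerivAt.fun_sum (u := Finset.univ) fun i _ => (hX i).pow 2
  have key := ((((ht.const_mul 4).mul hA).mul hT).add
    ((hr.add (ht.pow 2)).mul (hG.add (hT.pow 2)))).add
    (((ht.const_mul (2 * ((n : ℝ) - 1))).mul h).mul hT) |>.sub
    ((h.pow 2).const_mul ((n : ℝ) - 1))
  rw [(hasDerivAt_line (contDiff_confDensity hW) p (eT n)).unique key]
  simp only [zero_smul, add_zero, Pi.mul_apply, Pi.pow_apply, Pi.add_apply, zero_mul, zero_add,
    mul_zero, Finset.sum_const_zero, Nat.cast_ofNat, Nat.add_one_sub_one, pow_one, mul_one]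
  ring

lemma dirDeriv_space_confFlux {n : ℕ} {W : ℝ × Euc n → ℝ} (hW : ContDiff ℝ (⊤ : ℕ∞) W)
    (j : Fin n) (p : ℝ × Euc n) :
    dirDeriv (eX j) (confFlux W j) p =
      4 * p.2 j * dirDeriv (eT n) W p * dirDeriv (eX j) W p
      + 2 * (∑ i, p.2 i ^ 2 + p.1 ^ 2) *
        (dirDeriv (eX j) (dirDeriv (eT n) W) p * dirDeriv (eX j) W p
          + dirDeriv (eT n) W p * dirDeriv (eX j) (dirDeriv (eX j) W) p)
      + 2 * p.1 * (dirDeriv (eT n) W p ^ 2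
          + 2 * p.2 j * dirDeriv (eT n) W p * dirDeriv (eX j) (dirDeriv (eT n) W) p)
      + 4 * p.1 * ((dirDeriv (eX j) W p
            + ∑ i, p.2 i * dirDeriv (eX j) (dirDeriv (eX i) W) p) * dirDeriv (eX j) W p
          + (∑ i, p.2 i * dirDeriv (eX i) W p) * dirDeriv (eX j) (dirDeriv (eX j) W) p)
      - 2 * p.1 * (∑ i, dirDeriv (eX i) W p ^ 2
          + p.2 j * ∑ i, 2 * dirDeriv (eX i) W p * dirDeriv (eX j) (dirDeriv (eX i) W) p)
      + 2 * ((n : ℝ) - 1) * p.1 * (dirDeriv (eX j) W p ^ 2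
          + W p * dirDeriv (eX j) (dirDeriv (eX j) W) p) := by
  have ht : HasDerivAt (fun s : ℝ => (p + s • eX j).1) 0 0 := by
    simpa using hasDerivAt_const (0 : ℝ) p.1
  have hx : ∀ i, HasDerivAt (fun s : ℝ => (p + s • eX j).2 i) (if i = j then 1 else 0) 0 := by
    intro i
    by_cases hij : i = j
    · subst hij
      simpa using (hasDerivAt_id (0 : ℝ)).const_add (p.2 i)
    · simpa [hij] using hasDerivAt_const (0 : ℝ) (p.2 i)
  have h := hasDerivAt_line hW p (eX j)
  have hT := hasDerivAt_line (contDiff_dirDeriv hW (eT n)) p (eX j)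
  have hX := fun i => hasDerivAt_line (contDiff_dirDeriv hW (eX i)) p (eX j)
  have hA := HasDerivAt.fun_sum (u := Finset.univ) fun i _ => (hx i).mul (hX i)
  have hr := HasDerivAt.fun_sum (u := Finset.univ) fun i _ => (hx i).pow 2
  have hG := HasDerivAt.fun_sum (u := Finset.univ) fun i _ => (hX i).pow 2
  have key := ((((((hr.add (ht.pow 2)).const_mul 2).mul hT).mul (hX j)).add
    (((ht.const_mul 2).mul (hx j)).mul (hT.pow 2))).add
    (((ht.const_mul 4).mul hA).mul (hX j))).sub
    (((ht.const_mul 2).mul (hx j)).mul hG) |>.add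
    (((ht.const_mul (2 * ((n : ℝ) - 1))).mul h).mul (hX j))
  rw [(hasDerivAt_line (contDiff_confFlux hW j) p (eX j)).unique key]
  simp only [zero_smul, add_zero, Pi.mul_apply, Pi.pow_apply, Pi.add_apply, zero_mul, zero_add,
    mul_zero, Nat.cast_ofNat, Nat.add_one_sub_one, pow_one, mul_one, ite_mul, mul_ite,
    one_mul, Finset.sum_add_distrib, Finset.sum_ite_eq', Finset.mem_univ, if_true]
  ring

/-- The local conservation law: the time derivative of the density is the divergence of the
flux, for solutions of the wave equation. -/
lemma conservation_law {n : ℕ} {W : ℝ × Euc n → ℝ} (hW : ContDiff ℝ (⊤ : ℕ∞) W)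
    (hwave : ∀ p, dirDeriv (eT n) (dirDeriv (eT n) W) p =
      ∑ j, dirDeriv (eX j) (dirDeriv (eX j) W) p) (p : ℝ × Euc n) :
    dirDeriv (eT n) (confDensity W) p = ∑ j, dirDeriv (eX j) (confFlux W j) p := by
  rw [dirDeriv_time_confDensity hW, Finset.sum_congr rfl fun j _ => dirDeriv_space_confFlux hW j p]
  simp only [dirDeriv_comm hW (eT n) (eX _)]
  rw [hwave]
  -- The two terms with mixed second derivatives cancel by symmetry of the Hessian.
  have hsymm : ∑ j, (∑ i, p.2 i * dirDeriv (eX j) (dirDeriv (eX i) W) p) * dirDeriv (eX j) W p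
      = ∑ j, p.2 j * ∑ i, dirDeriv (eX i) W p * dirDeriv (eX j) (dirDeriv (eX i) W) p := by
    simp only [Finset.sum_mul, Finset.mul_sum]
    rw [Finset.sum_comm]
    refine Finset.sum_congr rfl fun i _ => Finset.sum_congr rfl fun j _ => ?_
    rw [dirDeriv_comm hW (eX j) (eX i)]
    ring
  -- Pull all constants out of the sums, so that only finitely many distinct sums remain.
  simp only [mul_assoc, mul_add, add_mul, Finset.sum_add_distrib, Finset.sum_sub_distrib,
    ← Finset.mul_sum, Finset.sum_const, Finset.card_univ, Fintype.card_fin, nsmul_eq_mul] at hsymm ⊢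
  have h1 (a : Fin n → ℝ) : ∑ j, p.2 j * (dirDeriv (eT n) W p * a j)
      = (∑ j, p.2 j * a j) * dirDeriv (eT n) W p := by
    rw [Finset.sum_mul]
    exact Finset.sum_congr rfl fun j _ => by ring
  have h2 : ∑ j, dirDeriv (eX j) W p * dirDeriv (eX j) W p = ∑ j, dirDeriv (eX j) W p ^ 2 :=
    Finset.sum_congr rfl fun j _ => by ring
  have h3 : ∑ j, dirDeriv (eX j) (dirDeriv (eT n) W) p * dirDeriv (eX j) W p
      = ∑ j, dirDeriv (eX j) W p * dirDeriv (eX j) (dirDeriv (eT n) W) p :=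
    Finset.sum_congr rfl fun j _ => by ring
  have h4 (a : Fin n → ℝ) : ∑ j, p.2 j * (2 * a j) = 2 * ∑ j, p.2 j * a j := by
    rw [Finset.mul_sum]
    exact Finset.sum_congr rfl fun j _ => by ring
  rw [h1, h1, h2, h3, h4]
  linear_combination (-4 * p.1) * hsymm

/-! ### Conservation of the conformal energy -/

/-- Conservation of the conformal energy for solutions of the free wave equation
with compactly supported smooth data. -/
theorem conformal_energy_conservation {n : ℕ} (hn : 1 ≤ n) {R : ℝ} (hR : 0 < R)
    (f g : Euc n → ℝ) (w : ℝ → Euc n → ℝ)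
    (hf : ContDiff ℝ (⊤ : ℕ∞) f) (hg : ContDiff ℝ (⊤ : ℕ∞) g)
    (hfsupp : tsupport f ⊆ Metric.closedBall 0 R)
    (hgsupp : tsupport g ⊆ Metric.closedBall 0 R)
    (hw : ContDiff ℝ (⊤ : ℕ∞) (fun p : ℝ × Euc n => w p.1 p.2))
    (hwave : ∀ t x, pt (pt w) t x = lap (w t) x)
    (hw0 : ∀ x, w 0 x = f x) (hw1 : ∀ x, pt w 0 x = g x)
    (hfps : ∀ t, tsupport (w t) ⊆ Metric.closedBall 0 (R + |t|))
    (T : ℝ) :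
    ∫ x, Qdens w T x = ∫ x, Qdens w 0 x := by
  set W : ℝ × Euc n → ℝ := fun p => w p.1 p.2 with hWdef
  have hpt : pt w = fun t x => dirDeriv (eT n) W (t, x) := by
    funext t x
    exact (hasDerivAt_time hw t x).deriv
  have hptt : ∀ t x, pt (pt w) t x = dirDeriv (eT n) (dirDeriv (eT n) W) (t, x) := by
    intro t x
    rw [hpt]
    exact (hasDerivAt_time (contDiff_dirDeriv hw (eT n)) t x).deriv
  have hpj : ∀ t x j, pj (w t) x j = dirDeriv (eX j) W (t, x) := fun t x j =>
    fderiv_space hw t x j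
  have hlap : ∀ t x, lap (w t) x = ∑ j, dirDeriv (eX j) (dirDeriv (eX j) W) (t, x) := by
    intro t x
    unfold lap
    refine Finset.sum_congr rfl fun j _ => ?_
    simp only [hpj]
    exact fderiv_space (contDiff_dirDeriv hw (eX j)) t x j
  have hgrad : ∀ t x i, gradient (w t) x i = dirDeriv (eX i) W (t, x) := by
    intro t x i
    rw [← hpj, pj, ← inner_gradient_left, EuclideanSpace.inner_single_right]
    simp
  have hQ : ∀ t x, Qdens w t x = confDensity W (t, x) := by
    intro t x
    simp only [Qdens, confDensity, EuclideanSpace.real_norm_sq_eq, PiLp.inner_apply, hgrad, hpt,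
      RCLike.inner_apply, conj_trivial, hWdef, mul_comm (dirDeriv (eX _) _ _) (x.ofLp _)]
  have hW0 : ∀ p ∈ coneExt n R, W p = 0 := by
    intro p hp
    refine image_eq_zero_of_notMem_tsupport (f := w p.1) (x := p.2) fun hmem => ?_
    have h := hfps p.1 hmem
    rw [mem_closedBall_zero_iff] at h
    exact absurd hp (not_lt.2 h)
  have hD0 := dirDeriv_eqOn_zero (isOpen_coneExt n R) hW0
  have hcons := conservation_law hw (W := W) fun p => by
    rw [← hptt p.1 p.2, hwave, hlap]
  have hflux0 : ∀ j, ∀ p ∈ coneExt n R, confFlux W j p = 0 := fun j p hp => by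
    simp [confFlux, hD0 _ p hp]
  have hdens0 : ∀ p ∈ coneExt n R, confDensity W p = 0 := fun p hp => by
    simp [confDensity, hD0 _ p hp, hW0 p hp]
  have hderiv : ∀ t, HasDerivAt (fun s => ∫ x, confDensity W (s, x)) 0 t := by
    intro t
    have h := hasDerivAt_integral_slice (contDiff_confDensity hw) hdens0 t
    simp only [hcons] at h
    rw [integral_finsetSum _ fun j _ => integrable_slice
      (contDiff_dirDeriv (contDiff_confFlux hw j) (eX j)).continuous
      (dirDeriv_eqOn_zero (isOpen_coneExt n R) (hflux0 j) (eX j)) t] at h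
    simpa only [integral_dirDeriv_space (contDiff_confFlux hw _) (hflux0 _),
      Finset.sum_const_zero] using h
  simp only [hQ]
  exact is_const_of_deriv_eq_zero (fun t => (hderiv t).differentiableAt)
    (fun t => (hderiv t).deriv) T 0
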